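/- arXiv:math/0412051 — 3 statements merged into one kernel-verified Lean document; each statement's English description precedes it below -/
import Mathlib

section
/- For every t ≥ 0 and x ∈ ℝ² with |x| < δ and |φ_t(x)| < δ/2, one has ‖Dφ_t(x)‖ < 4 e^{λt} (Lemma 3.3(ii)). -/
/-!
On `U` the flow is conjugate to its linearization, so near a point `x` with `x, φ_t(x) ∈ U` one has
`φ_t = h⁻¹ ∘ e^{Bt} ∘ h`, and the chain rule (`fderiv_phi_eq`) gives
`Dφ_t(x) = Dh⁻¹(h(φ_t(x))) ∘ e^{Bt} ∘ Dh(x)`. The outer factors have norm at most `3/2` because they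
are within `1/2` of the identity; for the left one this uses `|h(φ_t(x))| < 2 · δ/2 = δ`. The middle
factor has norm at most `e^{λt}` for `t ≥ 0` (`norm_diagCLM_le`). The product is at most
`(9/4) e^{λt} < 4 e^{λt}`.
-/

open Filter Topology Metric Real RealInnerProductSpace

noncomputable section

/-- An element of `ℝ²` (with the Euclidean norm) with given coordinates. -/
def vec2 (a b : ℝ) : EuclideanSpace ℝ (Fin 2) := (WithLp.equiv 2 (Fin 2 → ℝ)).symm ![a, b]

/-- The setup of Turner, "Convergence of Markov processes near saddle fixed points",
Section 3: a saddle-type vector field `b x = B x + τ x` with `B = diag(-μ, λ)`,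
a flow `φ` for `b`, a Hartman linearization `h` on a neighbourhood `U` of `0`,
and a radius `δ` on which `h` is close to the identity. -/
structure SaddleFlow where
  lam : ℝ
  mu : ℝ
  lam_pos : 0 < lam
  mu_pos : 0 < mu
  /-- the nonlinearity τ -/
  tau : EuclideanSpace ℝ (Fin 2) → EuclideanSpace ℝ (Fin 2)
  tau_smooth : ContDiff ℝ 2 tau
  tau_zero : tau 0 = 0
  dtau_zero : fderiv ℝ tau 0 = 0
  /-- the flow of `b x = B x + τ x` -/
  phi : ℝ → EuclideanSpace ℝ (Fin 2) → EuclideanSpace ℝ (Fin 2)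
  phi_zero : ∀ x, phi 0 x = x
  phi_hasDerivAt : ∀ t x, HasDerivAt (fun s => phi s x)
      (vec2 (-mu * (phi t x) 0) (lam * (phi t x) 1) + tau (phi t x)) t
  phi_add : ∀ t s x, phi (t + s) x = phi t (phi s x)
  phi_contDiff : ∀ t, ContDiff ℝ 1 (phi t)
  /-- the domain of the Hartman linearization -/
  U : Set (EuclideanSpace ℝ (Fin 2))
  U_open : IsOpen U
  U_mem : (0 : EuclideanSpace ℝ (Fin 2)) ∈ U
  /-- the linearizing C¹ diffeomorphism `h : U → V = h '' U` and its inverse -/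
  h : EuclideanSpace ℝ (Fin 2) → EuclideanSpace ℝ (Fin 2)
  hinv : EuclideanSpace ℝ (Fin 2) → EuclideanSpace ℝ (Fin 2)
  h_smooth : ∀ x ∈ U, ContDiffAt ℝ 1 h x
  hinv_smooth : ∀ y ∈ h '' U, ContDiffAt ℝ 1 hinv y
  V_open : IsOpen (h '' U)
  left_inv : ∀ x ∈ U, hinv (h x) = x
  right_inv : ∀ y ∈ h '' U, h (hinv y) = y
  /-- the Hölder exponent of the partial derivatives of `h`, `h⁻¹` -/
  alpha0 : ℝ
  alpha0_mem : alpha0 ∈ Set.Ioc (0 : ℝ) 1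
  holder : ∃ C : ℝ,
      (∀ x ∈ U, ∀ y ∈ U, ‖fderiv ℝ h x - fderiv ℝ h y‖ ≤ C * ‖x - y‖ ^ alpha0) ∧
      (∀ x ∈ h '' U, ∀ y ∈ h '' U,
        ‖fderiv ℝ hinv x - fderiv ℝ hinv y‖ ≤ C * ‖x - y‖ ^ alpha0)
  /-- `h x = x + o(|x|)` as `x → 0` -/
  h_littleO : (fun x => h x - x) =o[𝓝 (0 : EuclideanSpace ℝ (Fin 2))] (fun x => x)
  /-- the conjugation `h (φ_t x) = e^{Bt} (h x)` -/
  h_conj : ∀ t x, x ∈ U → phi t x ∈ U →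
      h (phi t x) = vec2 (Real.exp (-mu * t) * (h x) 0) (Real.exp (lam * t) * (h x) 1)
  /-- the radius δ -/
  delta : ℝ
  delta_pos : 0 < delta
  delta_lt_one : delta < 1
  ball_sub : closedBall (0 : EuclideanSpace ℝ (Fin 2)) delta ⊆ U ∩ h '' U
  /-- `sup_{0<|x|<δ} max(|h x|/|x|, |h⁻¹ x|/|x|) < 2` -/
  h_ratio : ∃ c : ℝ, c < 2 ∧ ∀ x : EuclideanSpace ℝ (Fin 2), ‖x‖ < delta →
      ‖h x‖ ≤ c * ‖x‖ ∧ ‖hinv x‖ ≤ c * ‖x‖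
  /-- `sup_{|x|<δ} max(‖Dh(x) − I‖, ‖Dh⁻¹(x) − I‖) < 1/2` -/
  deriv_close : ∃ c : ℝ, c < 1/2 ∧ ∀ x : EuclideanSpace ℝ (Fin 2), ‖x‖ < delta →
      ‖fderiv ℝ h x - ContinuousLinearMap.id ℝ (EuclideanSpace ℝ (Fin 2))‖ ≤ c ∧
      ‖fderiv ℝ hinv x - ContinuousLinearMap.id ℝ (EuclideanSpace ℝ (Fin 2))‖ ≤ c

/-- The linear flow `e^{Bt} = diag(e^{-μt}, e^{λt})`, for general diagonal entries `a`, `b`,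
as a continuous linear map of the Euclidean plane. -/
def diagCLM (a b : ℝ) : EuclideanSpace ℝ (Fin 2) →L[ℝ] EuclideanSpace ℝ (Fin 2) :=
  LinearMap.toContinuousLinearMap
    { toFun := fun v => vec2 (a * v 0) (b * v 1)
      map_add' := fun v w => by
        ext i; fin_cases i <;> simp [vec2, mul_add]
      map_smul' := fun c v => by
        ext i; fin_cases i <;> simp [vec2, mul_left_comm] }

theorem diagCLM_apply (a b : ℝ) (v : EuclideanSpace ℝ (Fin 2)) :
    diagCLM a b v = vec2 (a * v 0) (b * v 1) := rfl

theorem norm_diagCLM_le {a b : ℝ} (ha : 0 ≤ a) (hab : a ≤ b) : ‖diagCLM a b‖ ≤ b := by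
  have hb := ha.trans hab
  refine ContinuousLinearMap.opNorm_le_bound _ hb fun v => ?_
  rw [diagCLM_apply]
  refine le_of_sq_le_sq ?_ (by positivity)
  rw [mul_pow, EuclideanSpace.real_norm_sq_eq, EuclideanSpace.real_norm_sq_eq,
    Fin.sum_univ_two, Fin.sum_univ_two]
  simp only [vec2, WithLp.equiv_symm_apply, Matrix.cons_val_zero, Matrix.cons_val_one]
  rw [mul_pow, mul_pow, mul_add]
  gcongr

/-- An operator within `c` of the identity has norm at most `1 + c`. -/
theorem norm_le_of_close {A : EuclideanSpace ℝ (Fin 2) →L[ℝ] EuclideanSpace ℝ (Fin 2)} {c : ℝ}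
    (h : ‖A - ContinuousLinearMap.id ℝ (EuclideanSpace ℝ (Fin 2))‖ ≤ c) : ‖A‖ ≤ 1 + c := by
  have h1 := norm_le_norm_add_norm_sub' A (ContinuousLinearMap.id ℝ (EuclideanSpace ℝ (Fin 2)))
  have h2 := ContinuousLinearMap.norm_id_le (𝕜 := ℝ) (E := EuclideanSpace ℝ (Fin 2))
  linarith

/-- The differentiated conjugation `φ_t = h⁻¹ ∘ e^{Bt} ∘ h`. -/
theorem fderiv_phi_eq (S : SaddleFlow) {t : ℝ} {x : EuclideanSpace ℝ (Fin 2)}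
    (hx : x ∈ S.U) (hp : S.phi t x ∈ S.U) :
    fderiv ℝ (S.phi t) x = (fderiv ℝ S.hinv (S.h (S.phi t x))).comp
      ((diagCLM (Real.exp (-S.mu * t)) (Real.exp (S.lam * t))).comp (fderiv ℝ S.h x)) := by
  set L := diagCLM (Real.exp (-S.mu * t)) (Real.exp (S.lam * t)) with hL
  have hconj : L (S.h x) = S.h (S.phi t x) := by
    rw [S.h_conj t x hx hp, hL, diagCLM_apply]
  -- Both `x` and `φ_t(x)` stay in the open set `U` under a small perturbation of `x`.
  have heq : S.phi t =ᶠ[𝓝 x] fun y => S.hinv (L (S.h y)) := by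
    filter_upwards [S.U_open.mem_nhds hx,
      (S.phi_contDiff t).continuous.continuousAt.preimage_mem_nhds (S.U_open.mem_nhds hp)]
      with y hy hpy
    rw [hL, diagCLM_apply, ← S.h_conj t y hy hpy, S.left_inv _ hpy]
  have hh : HasFDerivAt S.h (fderiv ℝ S.h x) x :=
    ((S.h_smooth x hx).differentiableAt one_ne_zero).hasFDerivAt
  have hi : HasFDerivAt S.hinv (fderiv ℝ S.hinv (S.h (S.phi t x))) (L (S.h x)) := by
    rw [hconj]
    exact ((S.hinv_smooth _ ⟨_, hp, rfl⟩).differentiableAt one_ne_zero).hasFDerivAt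
  rw [heq.fderiv_eq]
  exact (hi.comp x (L.hasFDerivAt.comp x hh)).fderiv

/-- Lemma 3.3(ii): if `|x| < δ` and `|φ_t(x)| < δ/2` (with `t ≥ 0`), then
`‖Dφ_t(x)‖ < 4 e^{λt}`. -/
theorem jacobian_growth_bound (S : SaddleFlow) :
    ∀ t : ℝ, 0 ≤ t → ∀ x : EuclideanSpace ℝ (Fin 2),
      ‖x‖ < S.delta → ‖S.phi t x‖ < S.delta / 2 →
      ‖fderiv ℝ (S.phi t) x‖ < 4 * Real.exp (S.lam * t) := by
  intro t ht x hx hpx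
  obtain ⟨c, hc, hratio⟩ := S.h_ratio
  obtain ⟨d, hd, hclose⟩ := S.deriv_close
  have hpx' : ‖S.phi t x‖ < S.delta := by linarith [S.delta_pos]
  have mem_U : ∀ {y : EuclideanSpace ℝ (Fin 2)}, ‖y‖ < S.delta → y ∈ S.U := fun hy =>
    (S.ball_sub (by simpa using hy.le)).1
  -- `|φ_t(x)| < δ/2` and the ratio bound put `h(φ_t(x))` where `Dh⁻¹` is controlled.
  have hz : ‖S.h (S.phi t x)‖ < S.delta := by
    have h1 := (hratio _ hpx').1
    nlinarith [norm_nonneg (S.phi t x)]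
  have hA := norm_le_of_close (hclose _ hz).2
  have hB := norm_le_of_close (hclose _ hx).1
  have hexp : Real.exp (-S.mu * t) ≤ Real.exp (S.lam * t) := by
    refine Real.exp_le_exp.2 ?_
    nlinarith [mul_nonneg S.mu_pos.le ht, mul_nonneg S.lam_pos.le ht]
  have hD := norm_diagCLM_le (Real.exp_pos _).le hexp
  have hE := Real.exp_pos (S.lam * t)
  rw [fderiv_phi_eq S (mem_U hx) (mem_U hpx')]
  calc _ ≤ ‖fderiv ℝ S.hinv (S.h (S.phi t x))‖ *
        (‖diagCLM (Real.exp (-S.mu * t)) (Real.exp (S.lam * t))‖ * ‖fderiv ℝ S.h x‖) :=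
        (ContinuousLinearMap.opNorm_comp_le _ _).trans
          (mul_le_mul_of_nonneg_left (ContinuousLinearMap.opNorm_comp_le _ _) (norm_nonneg _))
    _ ≤ (3 / 2) * (Real.exp (S.lam * t) * (3 / 2)) := by
        gcongr <;> linarith
    _ < 4 * Real.exp (S.lam * t) := by linarith
end
end

section
/- Suppose R > (1/λ) log(8/(δ − 4|x̄₀|)). Then for every z ∈ ℝ² with 0 < |z| < 1, every x ∈ ℝ² with |x − x₀| ≤ |z|, and every t with 0 ≤ t ≤ −(1/λ) log|z| − R, one has |φ_t(x)| ≤ 2|x̄₀| e^{−μt} + 4|z| e^{λt} < δ/2 (intermediate claim in the proof of Theorem 3.4: trajectories starting within |z| of x₀ stay in the ball of radius δ/2 up to time −(1/λ) log|z| − R). -/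
/-!
The linearization turns the flow into the explicit linear flow `e^{Bt}`, so everything is read off
in linear coordinates. Comparing `h (φ_t x₀) = e^{Bt} h x₀` with `h y = y + o(|y|)` and the limit
`e^{μt} φ_t x₀ → (x̄₀, 0)` forces `h x₀ = (x̄₀, 0)` (`h_stable_point`). Since `‖Dh‖ ≤ 3/2` on the
`δ`-ball, `|h x - h x₀| ≤ (3/2)|z|`, whence `|e^{Bt} h x| ≤ |x̄₀| e^{-μt} + (3/2)|z| e^{λt}`; the
condition on `R` makes twice this smaller than `δ/2`. As long as `|φ_t x| ≤ δ`, the point `φ_t x` is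
`h⁻¹ (e^{Bt} h x)`, and `|h⁻¹ y| ≤ 2|y|` gives the asserted bound (`norm_phi_le_of_mem`).
Hence the continuous function `s ↦ |φ_s x|`, which starts below `δ/2`, never takes the value `δ/2`
on `[0, t]`, and by the intermediate value theorem it stays below `δ/2`.
-/

open Filter Topology Metric Real RealInnerProductSpace

noncomputable section

@[simp] lemma vec2_apply_zero (a b : ℝ) : vec2 a b 0 = a := by simp [vec2]

@[simp] lemma vec2_apply_one (a b : ℝ) : vec2 a b 1 = b := by simp [vec2]

/-- The linear flow `e^{Bt}` with `B = diag(-μ, λ)`, applied to the vector `v`. -/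
def linFlow (S : SaddleFlow) (t : ℝ) (v : EuclideanSpace ℝ (Fin 2)) : EuclideanSpace ℝ (Fin 2) :=
  vec2 (Real.exp (-S.mu * t) * v 0) (Real.exp (S.lam * t) * v 1)

lemma mem_U_of_norm_le (S : SaddleFlow) {x : EuclideanSpace ℝ (Fin 2)} (hx : ‖x‖ ≤ S.delta) :
    x ∈ S.U :=
  (S.ball_sub (by simpa using hx)).1

lemma norm_h_sub_le (S : SaddleFlow) {x y : EuclideanSpace ℝ (Fin 2)}
    (hx : ‖x‖ < S.delta) (hy : ‖y‖ < S.delta) : ‖S.h x - S.h y‖ ≤ 3 / 2 * ‖x - y‖ := by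
  obtain ⟨c, hc, hcl⟩ := S.deriv_close
  refine (convex_ball (0 : EuclideanSpace ℝ (Fin 2)) S.delta).norm_image_sub_le_of_norm_fderiv_le
    (𝕜 := ℝ) (fun w hw => ?_) (fun w hw => ?_) (by simpa using hy) (by simpa using hx)
  · have hw' : ‖w‖ < S.delta := by simpa using hw
    exact (S.h_smooth w (mem_U_of_norm_le S hw'.le)).differentiableAt (by norm_num)
  · have hw' : ‖w‖ < S.delta := by simpa using hw
    have h1 := (hcl w hw').1
    have h2 : ‖ContinuousLinearMap.id ℝ (EuclideanSpace ℝ (Fin 2))‖ ≤ 1 :=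
      ContinuousLinearMap.norm_id_le
    have h3 := norm_le_norm_sub_add (fderiv ℝ S.h w)
      (ContinuousLinearMap.id ℝ (EuclideanSpace ℝ (Fin 2)))
    linarith

/-- The linearization sends a point of the stable manifold to its asymptotic coordinate on the
stable axis. -/
lemma h_stable_point (S : SaddleFlow) (x₀ : EuclideanSpace ℝ (Fin 2)) (hx₀ : ‖x₀‖ ≤ S.delta)
    (hx₀_stable : Tendsto (fun t => S.phi t x₀) atTop (𝓝 (0 : EuclideanSpace ℝ (Fin 2))))
    (xb : ℝ)
    (hxb : Tendsto (fun t => Real.exp (S.mu * t) • S.phi t x₀) atTop (𝓝 (vec2 xb 0))) :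
    S.h x₀ = vec2 xb 0 := by
  -- Rescaling the error term: `e^{μt} (h (φ_t x₀) - φ_t x₀) = o(e^{μt} |φ_t x₀|) = o(1)`.
  have hlit : Tendsto
      (fun t => Real.exp (S.mu * t) • (S.h (S.phi t x₀) - S.phi t x₀)) atTop (𝓝 0) := by
    have h1 := S.h_littleO.comp_tendsto hx₀_stable
    have h2 := (Asymptotics.isBigO_refl (fun t : ℝ => Real.exp (S.mu * t)) atTop).smul_isLittleO h1
    exact (Asymptotics.isLittleO_one_iff ℝ).1 (h2.trans_isBigO (hxb.isBigO_one ℝ))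
  have hlim : Tendsto (fun t => Real.exp (S.mu * t) • S.h (S.phi t x₀)) atTop
      (𝓝 (vec2 xb 0)) := by
    have := hlit.add hxb
    simpa [← smul_add] using this
  have hev : ∀ᶠ t in atTop, S.phi t x₀ ∈ S.U :=
    hx₀_stable.eventually (S.U_open.mem_nhds S.U_mem)
  have hcoord (i : Fin 2) : Tendsto (fun t => Real.exp (S.mu * t) * S.h (S.phi t x₀) i) atTop
      (𝓝 (vec2 xb 0 i)) := by
    have := ((EuclideanSpace.proj i : EuclideanSpace ℝ (Fin 2) →L[ℝ] ℝ).continuous.tendsto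
      (vec2 xb 0)).comp hlim
    simpa [Function.comp_def] using this
  have hU := mem_U_of_norm_le S hx₀
  ext i
  fin_cases i
  · refine tendsto_nhds_unique (tendsto_const_nhds.congr' ?_) (hcoord 0)
    filter_upwards [hev] with t ht
    rw [S.h_conj t x₀ hU ht, vec2_apply_zero, ← mul_assoc, ← Real.exp_add]
    simp
  · -- `|h(x₀)₁| ≤ e^{(μ+λ)t} |h(x₀)₁| → 0`.
    have h0 : Tendsto (fun t => |Real.exp (S.mu * t) * S.h (S.phi t x₀) 1|) atTop (𝓝 0) := by
      simpa using (hcoord 1).abs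
    have hle : |S.h x₀ 1| ≤ 0 := by
      refine ge_of_tendsto h0 ?_
      filter_upwards [hev, eventually_ge_atTop 0] with t ht ht0
      rw [S.h_conj t x₀ hU ht, vec2_apply_one, ← mul_assoc, ← Real.exp_add, abs_mul, Real.abs_exp]
      refine le_mul_of_one_le_left (abs_nonneg _) (Real.one_le_exp ?_)
      have := mul_nonneg S.mu_pos.le ht0
      have := mul_nonneg S.lam_pos.le ht0
      linarith
    have : S.h x₀ 1 = 0 := abs_eq_zero.1 (le_antisymm hle (abs_nonneg _))
    simpa using this

lemma norm_linFlow_le (S : SaddleFlow) {t : ℝ} (ht : 0 ≤ t) (v : EuclideanSpace ℝ (Fin 2)) :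
    ‖linFlow S t v‖ ≤ Real.exp (S.lam * t) * ‖v‖ := by
  have hle : Real.exp (-S.mu * t) ≤ Real.exp (S.lam * t) := by
    apply Real.exp_le_exp.2
    have := mul_nonneg S.mu_pos.le ht
    have := mul_nonneg S.lam_pos.le ht
    linarith
  refine (sq_le_sq₀ (norm_nonneg _) (by positivity)).1 ?_
  rw [mul_pow, EuclideanSpace.real_norm_sq_eq, EuclideanSpace.real_norm_sq_eq]
  simp only [linFlow, Fin.sum_univ_two, vec2_apply_zero, vec2_apply_one, mul_pow]
  have := mul_le_mul_of_nonneg_right (pow_le_pow_left₀ (Real.exp_pos _).le hle 2) (sq_nonneg (v 0))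
  linarith

lemma norm_linFlow_stable (S : SaddleFlow) (t a : ℝ) :
    ‖linFlow S t (vec2 a 0)‖ = |a| * Real.exp (-S.mu * t) := by
  rw [EuclideanSpace.norm_eq]
  simp [linFlow, Fin.sum_univ_two, Real.sqrt_sq_eq_abs, abs_mul, mul_comm]

lemma linFlow_sub (S : SaddleFlow) (t : ℝ) (v w : EuclideanSpace ℝ (Fin 2)) :
    linFlow S t (v - w) = linFlow S t v - linFlow S t w := by
  ext i
  fin_cases i <;> simp [linFlow, mul_sub]

/-- The bound holds at every time at which the trajectory lies in the closed `δ`-ball, because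
there `φ_t x = h⁻¹ (e^{Bt} h x)`. -/
lemma norm_phi_le_of_mem (S : SaddleFlow) {x x₀ : EuclideanSpace ℝ (Fin 2)} {xb r t : ℝ}
    (hx₀ : ‖x₀‖ < S.delta) (hx : ‖x‖ < S.delta) (hxr : ‖x - x₀‖ ≤ r)
    (hh : S.h x₀ = vec2 xb 0) (ht : 0 ≤ t)
    (hsmall : 2 * |xb| * Real.exp (-S.mu * t) + 4 * r * Real.exp (S.lam * t) < S.delta / 2)
    (hmem : ‖S.phi t x‖ ≤ S.delta) :
    ‖S.phi t x‖ ≤ 2 * |xb| * Real.exp (-S.mu * t) + 4 * r * Real.exp (S.lam * t) := by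
  have hr : 0 ≤ r := (norm_nonneg _).trans hxr
  have hE := Real.exp_pos (S.lam * t)
  have hlin : ‖linFlow S t (S.h x)‖ ≤
      |xb| * Real.exp (-S.mu * t) + 3 / 2 * (r * Real.exp (S.lam * t)) := by
    have h1 := norm_linFlow_le S ht (S.h x - S.h x₀)
    have h2 := norm_h_sub_le S hx hx₀
    have h3 : Real.exp (S.lam * t) * ‖S.h x - S.h x₀‖ ≤ Real.exp (S.lam * t) * (3 / 2 * r) :=
      mul_le_mul_of_nonneg_left (by linarith) hE.le
    have h4 := norm_linFlow_stable S t xb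
    rw [linFlow_sub, hh] at h1
    rw [hh] at h3
    have h5 := norm_le_norm_sub_add (linFlow S t (S.h x)) (linFlow S t (vec2 xb 0))
    linarith
  have hrE : 0 ≤ r * Real.exp (S.lam * t) := mul_nonneg hr hE.le
  obtain ⟨c, hc, hcr⟩ := S.h_ratio
  have hU := mem_U_of_norm_le S hmem
  have hconj : S.h (S.phi t x) = linFlow S t (S.h x) :=
    S.h_conj t x (mem_U_of_norm_le S hx.le) hU
  have hlt : ‖linFlow S t (S.h x)‖ < S.delta := by linarith [S.delta_pos]
  have h6 := (hcr _ hlt).2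
  rw [← hconj, S.left_inv _ hU, hconj] at h6
  have h7 := mul_le_mul_of_nonneg_right hc.le (norm_nonneg (linFlow S t (S.h x)))
  linarith

/-- Intermediate claim in the proof of Theorem 3.4: if `R > (1/λ) log(8/(δ − 4|x̄₀|))`,
then for `0 < |z| < 1`, `|x − x₀| ≤ |z|` and `0 ≤ t ≤ −(1/λ) log|z| − R`, one has
`|φ_t(x)| ≤ 2|x̄₀| e^{−μt} + 4|z| e^{λt} < δ/2`. -/
theorem trajectories_stay_small (S : SaddleFlow) (x₀ : EuclideanSpace ℝ (Fin 2))
    (hx₀_pos : 0 < ‖x₀‖) (hx₀_lt : ‖x₀‖ < S.delta / 8)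
    (hx₀_stable : Tendsto (fun t => S.phi t x₀) atTop (𝓝 (0 : EuclideanSpace ℝ (Fin 2))))
    (xb : ℝ) (hxb_pos : 0 < |xb|) (hxb_lt : |xb| < S.delta / 4)
    (hxb : Tendsto (fun t => Real.exp (S.mu * t) • S.phi t x₀) atTop (𝓝 (vec2 xb 0)))
    (R : ℝ) (hR : R > (1 / S.lam) * Real.log (8 / (S.delta - 4 * |xb|))) :
    ∀ z : EuclideanSpace ℝ (Fin 2), 0 < ‖z‖ → ‖z‖ < 1 →
      ∀ x : EuclideanSpace ℝ (Fin 2), ‖x - x₀‖ ≤ ‖z‖ →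
        ∀ t : ℝ, 0 ≤ t → t ≤ -(1 / S.lam) * Real.log ‖z‖ - R →
          ‖S.phi t x‖ ≤ 2 * |xb| * Real.exp (-S.mu * t) + 4 * ‖z‖ * Real.exp (S.lam * t) ∧
          2 * |xb| * Real.exp (-S.mu * t) + 4 * ‖z‖ * Real.exp (S.lam * t) < S.delta / 2 := by
  intro z hz hz1 x hx t ht0 htR
  have hlam := S.lam_pos
  have hd := S.delta_pos
  have hgap : 0 < S.delta - 4 * |xb| := by linarith
  have hh := h_stable_point S x₀ (by linarith) hx₀_stable xb hxb
  -- Exponentiating the conditions on `s` and `R`: `|z| e^{λs} ≤ e^{-λR} < (δ - 4|x̄₀|)/8`.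
  have hgrow : ∀ s ≤ t, ‖z‖ * Real.exp (S.lam * s) < (S.delta - 4 * |xb|) / 8 := by
    intro s hs
    rw [← Real.log_lt_log_iff (by positivity) (by positivity),
      Real.log_mul hz.ne' (Real.exp_pos _).ne', Real.log_exp]
    have h1 : S.lam * s ≤ -Real.log ‖z‖ - S.lam * R := by
      have h := mul_le_mul_of_nonneg_left (hs.trans htR) hlam.le
      have e : S.lam * (-(1 / S.lam) * Real.log ‖z‖ - R) = -Real.log ‖z‖ - S.lam * R := by
        field_simp
      linarith
    have h2 : Real.log (8 / (S.delta - 4 * |xb|)) < S.lam * R := by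
      have h := mul_lt_mul_of_pos_left hR hlam
      have e : S.lam * (1 / S.lam * Real.log (8 / (S.delta - 4 * |xb|))) =
          Real.log (8 / (S.delta - 4 * |xb|)) := by
        field_simp
      linarith
    have h3 : Real.log ((S.delta - 4 * |xb|) / 8) = -Real.log (8 / (S.delta - 4 * |xb|)) := by
      rw [← Real.log_inv, inv_div]
    linarith
  have hsmall : ∀ s, 0 ≤ s → s ≤ t →
      2 * |xb| * Real.exp (-S.mu * s) + 4 * ‖z‖ * Real.exp (S.lam * s) < S.delta / 2 := by
    intro s hs0 hst
    have h1 := hgrow s hst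
    have h2 : Real.exp (-S.mu * s) ≤ 1 := by
      apply Real.exp_le_one_iff.2
      have := mul_nonneg S.mu_pos.le hs0
      linarith
    have h3 := mul_le_mul_of_nonneg_left h2 hxb_pos.le
    linarith
  have hxn : ‖x‖ < S.delta / 4 := by
    have h1 := hgrow 0 ht0
    simp only [mul_zero, Real.exp_zero, mul_one] at h1
    have h2 := norm_le_norm_sub_add x x₀
    linarith
  have hbound : ∀ s, 0 ≤ s → s ≤ t → ‖S.phi s x‖ ≤ S.delta →
      ‖S.phi s x‖ ≤ 2 * |xb| * Real.exp (-S.mu * s) + 4 * ‖z‖ * Real.exp (S.lam * s) :=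
    fun s hs0 hst hm => norm_phi_le_of_mem S (by linarith) (by linarith) hx hh hs0
      (hsmall s hs0 hst) hm
  have hcont : Continuous fun s => ‖S.phi s x‖ :=
    (continuous_iff_continuousAt.2 fun s => (S.phi_hasDerivAt s x).continuousAt).norm
  refine ⟨hbound t ht0 le_rfl ?_, hsmall t ht0 le_rfl⟩
  -- A trajectory leaving the `δ`-ball would first reach norm `δ/2`, where `hbound` says `< δ/2`.
  by_contra! hout
  obtain ⟨s, ⟨hs0, hst⟩, hs⟩ := intermediate_value_Icc ht0 hcont.continuousOn
    (show S.delta / 2 ∈ Set.Icc ‖S.phi 0 x‖ ‖S.phi t x‖ from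
      ⟨by rw [S.phi_zero]; linarith, by linarith⟩)
  simp only at hs
  have := hbound s hs0 hst (by linarith)
  linarith [hsmall s hs0 hst]
end
end

section
/- There exists x_∞ ∈ ℝ² with 0 < |x_∞| < δ/8 such that φ_{−t}(x_∞) → 0 as t → ∞. Moreover, for any such x_∞ there exists x̄_∞ ∈ ℝ with 0 < |x̄_∞| < δ/4 such that e^{λt} φ_{−t}(x_∞) → (0, x̄_∞) as t → ∞ and |φ_{−t}(x_∞)| ≤ 2|x̄_∞| e^{−λt} for all t ≥ 0, and there exists a nonzero row vector D_∞ ∈ (ℝ²)* such that e^{−μt} Dφ_{−t}(x_∞) converges, as t → ∞, to the 2×2 matrix whose first row is D_∞ and whose second row is (0, 0) (unstable-manifold analogue of Lemmas 3.2 and 3.3(i), obtained by applying them to the time-reversed flow). -/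
/-!
Along the backward flow the Hartman map `h` conjugates `φ_{-t}` to
`e^{-Bt} = diag(e^{μt}, e^{-λt})`. The unstable manifold near `0` is therefore the image under
`h⁻¹` of the vertical axis: if `h x = y` lies on the vertical axis and is small, then
`φ_{-t} x = h⁻¹ (e^{-λt} y)` for all `t ≥ 0` (`phi_neg_eq`). Since the conjugation is only assumed
at times when the orbit is in `U`, this is a connectedness argument on `[0, ∞)`.

Conversely, if `φ_{-t} x → 0`, then `e^{μt} (h x)₀ → 0`, which forces `(h x)₀ = 0`, and one takes
`x̄_∞ = (h x)₁`. The asymptotics of `φ_{-t} x` follow from `Dh⁻¹(0) = I` (`hasFDerivAt_hinv_zero`).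
Differentiating the conjugation gives
`Dφ_{-t}(x) = Dh⁻¹(e^{-λt} y) ∘ e^{-Bt} ∘ Dh(x)`, and multiplying by `e^{-μt}` and letting
`t → ∞` leaves `diag(1, 0) ∘ Dh(x)`. Thus `D_∞` is the first row of `Dh(x)`, whose first entry is
positive because `‖Dh(x) - I‖ < 1/2`.
-/

open Filter Topology Metric Real RealInnerProductSpace

noncomputable section

namespace SaddleFlow

/-! ### Diagonal maps and vertical vectors -/

/-- The linear map with matrix `diag(a, b)` on `ℝ²`, as a combination of coordinate projections
so that its dependence on `(a, b)` is visibly continuous. -/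
def diagL (a b : ℝ) : EuclideanSpace ℝ (Fin 2) →L[ℝ] EuclideanSpace ℝ (Fin 2) :=
  a • (EuclideanSpace.proj (0 : Fin 2) : EuclideanSpace ℝ (Fin 2) →L[ℝ] ℝ).smulRight
      (EuclideanSpace.single (0 : Fin 2) (1 : ℝ)) +
    b • (EuclideanSpace.proj (1 : Fin 2) : EuclideanSpace ℝ (Fin 2) →L[ℝ] ℝ).smulRight
      (EuclideanSpace.single (1 : Fin 2) (1 : ℝ))

lemma diagL_apply (a b : ℝ) (v : EuclideanSpace ℝ (Fin 2)) :
    diagL a b v = vec2 (a * v 0) (b * v 1) := by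
  ext i
  fin_cases i <;> simp [diagL, vec2]

lemma vec2_zero_left (b : ℝ) : vec2 0 b = b • EuclideanSpace.single (1 : Fin 2) (1 : ℝ) := by
  ext i
  fin_cases i <;> simp [vec2]

lemma norm_vec2_zero_left (b : ℝ) : ‖vec2 0 b‖ = |b| := by
  rw [vec2_zero_left, norm_smul]
  simp

lemma vec2_zero_mul (a b : ℝ) : vec2 0 (a * b) = a • vec2 0 b := by
  simp only [vec2_zero_left, mul_smul]

variable (S : SaddleFlow)

/-! ### The linearization near the origin -/

lemma mem_U_of_norm_lt {x : EuclideanSpace ℝ (Fin 2)} (hx : ‖x‖ < S.delta) : x ∈ S.U :=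
  (S.ball_sub (by simpa using hx.le)).1

lemma mem_V_of_norm_lt {x : EuclideanSpace ℝ (Fin 2)} (hx : ‖x‖ < S.delta) : x ∈ S.h '' S.U :=
  (S.ball_sub (by simpa using hx.le)).2

lemma hinv_mem {y : EuclideanSpace ℝ (Fin 2)} (hy : y ∈ S.h '' S.U) : S.hinv y ∈ S.U := by
  obtain ⟨x, hx, rfl⟩ := hy
  rwa [S.left_inv x hx]

lemma norm_h_le {x : EuclideanSpace ℝ (Fin 2)} (hx : ‖x‖ < S.delta) : ‖S.h x‖ ≤ 2 * ‖x‖ := by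
  obtain ⟨c, hc, H⟩ := S.h_ratio
  exact (H x hx).1.trans (by gcongr)

lemma norm_hinv_le {x : EuclideanSpace ℝ (Fin 2)} (hx : ‖x‖ < S.delta) :
    ‖S.hinv x‖ ≤ 2 * ‖x‖ := by
  obtain ⟨c, hc, H⟩ := S.h_ratio
  exact (H x hx).2.trans (by gcongr)

lemma h_zero : S.h 0 = 0 := by
  simpa using S.norm_h_le (x := 0) (by simpa using S.delta_pos)

lemma hinv_zero : S.hinv 0 = 0 := by
  simpa using S.norm_hinv_le (x := 0) (by simpa using S.delta_pos)

lemma zero_mem_V : (0 : EuclideanSpace ℝ (Fin 2)) ∈ S.h '' S.U :=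
  S.mem_V_of_norm_lt (by simpa using S.delta_pos)

lemma h_phi (t : ℝ) {x : EuclideanSpace ℝ (Fin 2)} (hx : x ∈ S.U) (hxt : S.phi t x ∈ S.U) :
    S.h (S.phi t x) = diagL (Real.exp (-S.mu * t)) (Real.exp (S.lam * t)) (S.h x) := by
  rw [S.h_conj t x hx hxt, diagL_apply]

/-- The derivative of `h⁻¹` at `0` is the identity, because that of `h` is. -/
lemma hasFDerivAt_hinv_zero :
    HasFDerivAt S.hinv (ContinuousLinearMap.id ℝ (EuclideanSpace ℝ (Fin 2))) 0 := by
  have h1 : HasFDerivAt S.h (ContinuousLinearMap.id ℝ (EuclideanSpace ℝ (Fin 2))) 0 := by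
    rw [hasFDerivAt_iff_isLittleO_nhds_zero]
    simpa [S.h_zero] using S.h_littleO
  have h2 : DifferentiableAt ℝ S.hinv (S.h 0) := by
    rw [S.h_zero]
    exact (S.hinv_smooth 0 S.zero_mem_V).differentiableAt one_ne_zero
  have h3 := h2.hasFDerivAt.comp 0 h1
  have h4 : S.hinv ∘ S.h =ᶠ[𝓝 0] id := by
    filter_upwards [S.U_open.mem_nhds S.U_mem] with x hx using S.left_inv x hx
  have h5 := (h3.congr_of_eventuallyEq h4.symm).unique (hasFDerivAt_id 0)
  have h6 := h2.hasFDerivAt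
  rw [ContinuousLinearMap.comp_id] at h5
  rw [h5, S.h_zero] at h6
  exact h6

/-! ### Backward orbits on the unstable manifold -/

lemma tendsto_exp_neg_mul {a : ℝ} (ha : 0 < a) :
    Tendsto (fun t : ℝ => Real.exp (-a * t)) atTop (𝓝 0) :=
  Real.tendsto_exp_atBot.comp (tendsto_id.const_mul_atTop_of_neg (neg_neg_of_pos ha))

lemma norm_vec2_exp_lt {b : ℝ} (hb : |b| < S.delta) {t : ℝ} (ht : 0 ≤ t) :
    ‖vec2 0 (Real.exp (-S.lam * t) * b)‖ < S.delta := by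
  rw [norm_vec2_zero_left, abs_mul, abs_of_pos (Real.exp_pos _)]
  have : Real.exp (-S.lam * t) ≤ 1 := by
    rw [Real.exp_le_one_iff]
    nlinarith [S.lam_pos]
  exact lt_of_le_of_lt (mul_le_of_le_one_left (abs_nonneg b) this) hb

lemma tendsto_vec2_exp (b : ℝ) :
    Tendsto (fun t : ℝ => vec2 0 (Real.exp (-S.lam * t) * b)) atTop (𝓝 0) := by
  simp only [vec2_zero_mul]
  simpa using (tendsto_exp_neg_mul S.lam_pos).smul_const (vec2 0 b)

/-- The backward orbit of a point whose image under `h` is a small vertical vector is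
the image under `h⁻¹` of the linear backward orbit. The set of times at which this holds is
closed by continuity, and open because the conjugation applies as long as the orbit is in `U`. -/
lemma phi_neg_eq {x : EuclideanSpace ℝ (Fin 2)} (hx : x ∈ S.U) {b : ℝ} (hxb : S.h x = vec2 0 b)
    (hb : |b| < S.delta) {t : ℝ} (ht : 0 ≤ t) :
    S.phi (-t) x = S.hinv (vec2 0 (Real.exp (-S.lam * t) * b)) := by
  have hphi : Continuous fun s : Set.Ici (0 : ℝ) => S.phi (-(s : ℝ)) x := by
    have : Continuous fun s => S.phi s x :=
      continuous_iff_continuousAt.2 fun s => (S.phi_hasDerivAt s x).continuousAt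
    fun_prop
  have hvec : Continuous fun s : Set.Ici (0 : ℝ) => vec2 0 (Real.exp (-S.lam * s) * b) := by
    simp only [vec2_zero_mul]
    fun_prop
  have hg : Continuous fun s : Set.Ici (0 : ℝ) =>
      S.hinv (vec2 0 (Real.exp (-S.lam * s) * b)) := by
    rw [continuous_iff_continuousAt]
    intro s
    exact ContinuousAt.comp (f := fun s : Set.Ici (0 : ℝ) => vec2 0 (Real.exp (-S.lam * s) * b))
      (S.hinv_smooth _ (S.mem_V_of_norm_lt (S.norm_vec2_exp_lt hb s.2))).continuousAt
      hvec.continuousAt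
  have hclopen : IsClopen {s : Set.Ici (0 : ℝ) |
      S.phi (-(s : ℝ)) x = S.hinv (vec2 0 (Real.exp (-S.lam * s) * b))} := by
    refine ⟨isClosed_eq hphi hg, ?_⟩
    rw [isOpen_iff_mem_nhds]
    intro s hs
    have hsU : S.phi (-(s : ℝ)) x ∈ S.U := by
      rw [show S.phi (-(s : ℝ)) x = _ from hs]
      exact S.hinv_mem (S.mem_V_of_norm_lt (S.norm_vec2_exp_lt hb s.2))
    filter_upwards [hphi.continuousAt.preimage_mem_nhds (S.U_open.mem_nhds hsU)] with r hr
    have h1 := S.h_phi (-(r : ℝ)) hx hr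
    rw [hxb, diagL_apply] at h1
    change S.phi (-(r : ℝ)) x = _
    rw [← S.left_inv (S.phi (-(r : ℝ)) x) hr, h1]
    simp [vec2]
  have : PreconnectedSpace (Set.Ici (0 : ℝ)) :=
    isPreconnected_iff_preconnectedSpace.1 isPreconnected_Ici
  have huniv := hclopen.eq_univ ⟨⟨0, Set.self_mem_Ici⟩, by
    simp [S.phi_zero, ← hxb, S.left_inv x hx]⟩
  exact (Set.ext_iff.1 huniv ⟨t, ht⟩).2 trivial

lemma phi_neg_mem {x : EuclideanSpace ℝ (Fin 2)} (hx : x ∈ S.U) {b : ℝ} (hxb : S.h x = vec2 0 b)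
    (hb : |b| < S.delta) {t : ℝ} (ht : 0 ≤ t) : S.phi (-t) x ∈ S.U := by
  rw [S.phi_neg_eq hx hxb hb ht]
  exact S.hinv_mem (S.mem_V_of_norm_lt (S.norm_vec2_exp_lt hb ht))

lemma tendsto_phi_neg {x : EuclideanSpace ℝ (Fin 2)} (hx : x ∈ S.U) {b : ℝ}
    (hxb : S.h x = vec2 0 b) (hb : |b| < S.delta) :
    Tendsto (fun t => S.phi (-t) x) atTop (𝓝 0) := by
  have h1 : Tendsto S.hinv (𝓝 0) (𝓝 0) := by
    simpa [S.hinv_zero] using S.hasFDerivAt_hinv_zero.continuousAt.tendsto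
  refine (h1.comp (S.tendsto_vec2_exp b)).congr' ?_
  filter_upwards [eventually_ge_atTop 0] with t ht using (S.phi_neg_eq hx hxb hb ht).symm

/-- A point attracted to `0` in backward time has vertical image under `h`: otherwise the
expanding coordinate `e^{μt} (h x)₀` would not tend to `0`. -/
lemma h_eq_of_tendsto {x : EuclideanSpace ℝ (Fin 2)} (hx : x ∈ S.U)
    (hlim : Tendsto (fun t => S.phi (-t) x) atTop (𝓝 0)) : S.h x = vec2 0 (S.h x 1) := by
  have h1 : Tendsto (fun t => S.h (S.phi (-t) x)) atTop (𝓝 0) := by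
    have : Tendsto S.h (𝓝 0) (𝓝 0) := by
      simpa [S.h_zero] using (S.h_smooth 0 S.U_mem).continuousAt.tendsto
    exact this.comp hlim
  have h2 : Tendsto (fun t => S.h (S.phi (-t) x) 0) atTop (𝓝 0) :=
    ((EuclideanSpace.proj (0 : Fin 2) : EuclideanSpace ℝ (Fin 2) →L[ℝ] ℝ).continuous.tendsto'
      0 0 (by simp)).comp h1
  have h3 : Tendsto (fun t => Real.exp (-S.mu * t) * S.h (S.phi (-t) x) 0) atTop (𝓝 0) := by
    simpa using (tendsto_exp_neg_mul S.mu_pos).mul h2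
  have h4 : Tendsto (fun _ : ℝ => S.h x 0) atTop (𝓝 0) := by
    refine h3.congr' ?_
    filter_upwards [hlim.eventually (S.U_open.mem_nhds S.U_mem)] with t ht
    rw [S.h_phi _ hx ht, diagL_apply]
    simp only [vec2]
    rw [show (-S.mu * -t) = -(-S.mu * t) by ring]
    simp [← mul_assoc, ← Real.exp_add]
  have h5 := tendsto_nhds_unique tendsto_const_nhds h4
  ext i
  fin_cases i
  · simpa [vec2] using h5
  · simp [vec2]

/-! ### Asymptotics of the backward flow and of its derivative -/

lemma fderiv_phi_neg {x : EuclideanSpace ℝ (Fin 2)} (hx : x ∈ S.U) {b : ℝ}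
    (hxb : S.h x = vec2 0 b) (hb : |b| < S.delta) {t : ℝ} (ht : 0 ≤ t) :
    fderiv ℝ (S.phi (-t)) x = (fderiv ℝ S.hinv (vec2 0 (Real.exp (-S.lam * t) * b))).comp
      ((diagL (Real.exp (S.mu * t)) (Real.exp (-S.lam * t))).comp (fderiv ℝ S.h x)) := by
  have hval : diagL (Real.exp (S.mu * t)) (Real.exp (-S.lam * t)) (S.h x) =
      vec2 0 (Real.exp (-S.lam * t) * b) := by
    rw [hxb, diagL_apply]
    simp [vec2]
  have heq : S.phi (-t) =ᶠ[𝓝 x] fun z =>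
      S.hinv (diagL (Real.exp (S.mu * t)) (Real.exp (-S.lam * t)) (S.h z)) := by
    filter_upwards [S.U_open.mem_nhds hx,
      (S.phi_contDiff (-t)).continuous.continuousAt.preimage_mem_nhds
        (S.U_open.mem_nhds (S.phi_neg_mem hx hxb hb ht))] with z hz hzt
    have h1 := S.h_phi (-t) hz hzt
    rw [show -S.mu * -t = S.mu * t by ring, show S.lam * -t = -S.lam * t by ring] at h1
    rw [← h1, S.left_inv _ hzt]
  have hh : HasFDerivAt S.h (fderiv ℝ S.h x) x :=
    ((S.h_smooth x hx).differentiableAt one_ne_zero).hasFDerivAt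
  have hd := (diagL (Real.exp (S.mu * t)) (Real.exp (-S.lam * t))).hasFDerivAt.comp x hh
  have hi : HasFDerivAt S.hinv (fderiv ℝ S.hinv (vec2 0 (Real.exp (-S.lam * t) * b)))
      ((diagL (Real.exp (S.mu * t)) (Real.exp (-S.lam * t)) ∘ S.h) x) := by
    rw [Function.comp_apply, hval]
    exact ((S.hinv_smooth _ (S.mem_V_of_norm_lt
      (S.norm_vec2_exp_lt hb ht))).differentiableAt one_ne_zero).hasFDerivAt
  exact ((hi.comp x hd).congr_of_eventuallyEq heq).fderiv

lemma tendsto_exp_smul_fderiv {x : EuclideanSpace ℝ (Fin 2)} (hx : x ∈ S.U) {b : ℝ}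
    (hxb : S.h x = vec2 0 b) (hb : |b| < S.delta) :
    Tendsto (fun t => Real.exp (-S.mu * t) • fderiv ℝ (S.phi (-t)) x) atTop
      (𝓝 ((diagL 1 0).comp (fderiv ℝ S.h x))) := by
  have h1 : Tendsto (fun t => fderiv ℝ S.hinv (vec2 0 (Real.exp (-S.lam * t) * b))) atTop
      (𝓝 (ContinuousLinearMap.id ℝ _)) := by
    have : ContinuousAt (fderiv ℝ S.hinv) 0 :=
      ((S.hinv_smooth 0 S.zero_mem_V).fderiv_right (m := 0) (by simp)).continuousAt
    have h := this.tendsto.comp (S.tendsto_vec2_exp b)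
    rwa [S.hasFDerivAt_hinv_zero.fderiv] at h
  have h2 : Tendsto (fun t => diagL 1 (Real.exp (-(S.mu + S.lam) * t))) atTop
      (𝓝 (diagL 1 0)) :=
    tendsto_const_nhds.add
      ((tendsto_exp_neg_mul (add_pos S.mu_pos S.lam_pos)).smul_const _)
  have h3 : Tendsto (fun t => (fderiv ℝ S.hinv (vec2 0 (Real.exp (-S.lam * t) * b))).comp
      ((diagL 1 (Real.exp (-(S.mu + S.lam) * t))).comp (fderiv ℝ S.h x))) atTop
      (𝓝 ((ContinuousLinearMap.id ℝ _).comp ((diagL 1 0).comp (fderiv ℝ S.h x)))) :=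
    h1.mul (h2.mul_const (fderiv ℝ S.h x))
  rw [ContinuousLinearMap.id_comp] at h3
  refine h3.congr' ?_
  filter_upwards [eventually_ge_atTop 0] with t ht
  rw [S.fderiv_phi_neg hx hxb hb ht, ← ContinuousLinearMap.comp_smul,
    ← ContinuousLinearMap.smul_comp]
  congr 2
  simp only [diagL, smul_add, smul_smul, ← Real.exp_add]
  congr 2
  · simp
  · congr 1
    ring

lemma tendsto_exp_smul_phi {x : EuclideanSpace ℝ (Fin 2)} (hx : x ∈ S.U) {b : ℝ}
    (hxb : S.h x = vec2 0 b) (hb : |b| < S.delta) :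
    Tendsto (fun t => Real.exp (S.lam * t) • S.phi (-t) x) atTop (𝓝 (vec2 0 b)) := by
  -- The difference quotients of `h⁻¹` at `0` in the direction `(0, b)`, with step `e^{-λt}`.
  have hline := (S.hasFDerivAt_hinv_zero.hasLineDerivAt (vec2 0 b)).tendsto_slope_zero
  have hstep : Tendsto (fun t : ℝ => Real.exp (-S.lam * t)) atTop (𝓝[≠] 0) :=
    tendsto_nhdsWithin_iff.2 ⟨tendsto_exp_neg_mul S.lam_pos,
      Eventually.of_forall fun t => (Real.exp_pos _).ne'⟩
  refine (hline.comp hstep).congr' ?_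
  filter_upwards [eventually_ge_atTop 0] with t ht
  rw [S.phi_neg_eq hx hxb hb ht, vec2_zero_mul]
  simp [S.hinv_zero, ← Real.exp_neg]

/-! ### The first row of `Dh(x)` -/

/-- The vector representing the functional `v ↦ (Dh(x) v)₀`, i.e. the first row of `Dh(x)`. -/
def firstRow (x : EuclideanSpace ℝ (Fin 2)) : EuclideanSpace ℝ (Fin 2) :=
  (InnerProductSpace.toDual ℝ (EuclideanSpace ℝ (Fin 2))).symm
    ((EuclideanSpace.proj (0 : Fin 2) : EuclideanSpace ℝ (Fin 2) →L[ℝ] ℝ).comp (fderiv ℝ S.h x))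

lemma inner_firstRow (x v : EuclideanSpace ℝ (Fin 2)) :
    inner ℝ (S.firstRow x) v = fderiv ℝ S.h x v 0 := by
  rw [firstRow, InnerProductSpace.toDual_symm_apply]
  simp

lemma firstRow_ne_zero {x : EuclideanSpace ℝ (Fin 2)} (hx : ‖x‖ < S.delta) :
    S.firstRow x ≠ 0 := by
  intro h0
  obtain ⟨c, hc, H⟩ := S.deriv_close
  set e : EuclideanSpace ℝ (Fin 2) := EuclideanSpace.single 0 1 with he
  have h1 := S.inner_firstRow x e
  rw [h0, inner_zero_left] at h1
  have h2 := (fderiv ℝ S.h x - ContinuousLinearMap.id ℝ _).le_opNorm e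
  have h3 := PiLp.norm_apply_le
    ((fderiv ℝ S.h x - ContinuousLinearMap.id ℝ (EuclideanSpace ℝ (Fin 2))) e) 0
  have h4 : ((fderiv ℝ S.h x - ContinuousLinearMap.id ℝ (EuclideanSpace ℝ (Fin 2))) e) 0 =
      -1 := by
    rw [_root_.sub_apply, PiLp.sub_apply, ← h1]
    simp [he]
  have h5 : ‖e‖ = 1 := by simp [he]
  rw [h4, norm_neg, norm_one] at h3
  rw [h5] at h2
  linarith [(H x hx).1]

lemma smulRight_firstRow (x : EuclideanSpace ℝ (Fin 2)) :
    (innerSL ℝ (S.firstRow x)).smulRight (EuclideanSpace.single 0 (1 : ℝ)) =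
      (diagL 1 0).comp (fderiv ℝ S.h x) := by
  ext v i
  simp [S.inner_firstRow, diagL]

end SaddleFlow

/-- Unstable-manifold analogue of Lemmas 3.2 and 3.3(i): there exists `x_∞` with
`0 < |x_∞| < δ/8` and `φ_{−t}(x_∞) → 0`; moreover for any such `x_∞` there is
`x̄_∞ ∈ ℝ` with `0 < |x̄_∞| < δ/4`, `e^{λt} φ_{−t}(x_∞) → (0, x̄_∞)` and
`|φ_{−t}(x_∞)| ≤ 2|x̄_∞| e^{−λt}` for `t ≥ 0`, and a nonzero row vector `D_∞` such that
`e^{−μt} Dφ_{−t}(x_∞)` converges to the matrix with rows `D_∞` and `(0,0)`. -/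
theorem unstable_manifold (S : SaddleFlow) :
    (∃ xinf : EuclideanSpace ℝ (Fin 2), 0 < ‖xinf‖ ∧ ‖xinf‖ < S.delta / 8 ∧
      Tendsto (fun t => S.phi (-t) xinf) atTop (𝓝 (0 : EuclideanSpace ℝ (Fin 2)))) ∧
    ∀ xinf : EuclideanSpace ℝ (Fin 2), 0 < ‖xinf‖ → ‖xinf‖ < S.delta / 8 →
      Tendsto (fun t => S.phi (-t) xinf) atTop (𝓝 (0 : EuclideanSpace ℝ (Fin 2))) →
      (∃ xbinf : ℝ, 0 < |xbinf| ∧ |xbinf| < S.delta / 4 ∧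
        Tendsto (fun t => Real.exp (S.lam * t) • S.phi (-t) xinf) atTop (𝓝 (vec2 0 xbinf)) ∧
        ∀ t : ℝ, 0 ≤ t → ‖S.phi (-t) xinf‖ ≤ 2 * |xbinf| * Real.exp (-S.lam * t)) ∧
      (∃ Dinf : EuclideanSpace ℝ (Fin 2), Dinf ≠ 0 ∧
        Tendsto (fun t => Real.exp (-S.mu * t) • fderiv ℝ (S.phi (-t)) xinf) atTop
          (𝓝 ((innerSL ℝ Dinf).smulRight (EuclideanSpace.single 0 (1 : ℝ))))) := by
  have hδ := S.delta_pos
  refine ⟨?_, ?_⟩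
  · have hb : |S.delta / 32| = S.delta / 32 := abs_of_pos (by positivity)
    have hn : ‖vec2 0 (S.delta / 32)‖ = S.delta / 32 := by
      rw [SaddleFlow.norm_vec2_zero_left, hb]
    have hlt : ‖vec2 0 (S.delta / 32)‖ < S.delta := by linarith
    have hV := S.mem_V_of_norm_lt hlt
    have hh := S.right_inv _ hV
    refine ⟨S.hinv (vec2 0 (S.delta / 32)), ?_, ?_, ?_⟩
    · rw [norm_pos_iff]
      intro h0
      rw [h0, S.h_zero] at hh
      rw [← hh, norm_zero] at hn
      linarith
    · linarith [S.norm_hinv_le hlt]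
    · exact S.tendsto_phi_neg (S.hinv_mem hV) hh (by linarith)
  · intro x hx0 hx8 hlim
    have hxδ : ‖x‖ < S.delta := by linarith
    have hxU := S.mem_U_of_norm_lt hxδ
    have hxb := S.h_eq_of_tendsto hxU hlim
    have hnorm : ‖S.h x‖ = |S.h x 1| := by
      conv_lhs => rw [hxb]
      exact SaddleFlow.norm_vec2_zero_left _
    have hb4 : |S.h x 1| < S.delta / 4 := by
      linarith [S.norm_h_le hxδ]
    have hb : |S.h x 1| < S.delta := by linarith
    refine ⟨⟨S.h x 1, ?_, hb4, S.tendsto_exp_smul_phi hxU hxb hb, ?_⟩,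
      S.firstRow x, S.firstRow_ne_zero hxδ, ?_⟩
    · rw [← hnorm, norm_pos_iff]
      intro h0
      have h1 := S.left_inv x hxU
      rw [h0, S.hinv_zero] at h1
      rw [← h1, norm_zero] at hx0
      exact lt_irrefl _ hx0
    · intro t ht
      rw [S.phi_neg_eq hxU hxb hb ht]
      refine (S.norm_hinv_le (S.norm_vec2_exp_lt hb ht)).trans (le_of_eq ?_)
      rw [SaddleFlow.norm_vec2_zero_left, abs_mul, abs_of_pos (Real.exp_pos _)]
      ring
    · rw [S.smulRight_firstRow]
      exact S.tendsto_exp_smul_fderiv hxU hxb hb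
end
end
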